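/- Let C be a finite alphabet and Γ a finite C-labeled directed graph. For every vertex v of Γ, the uniform Bernoulli measure μ(F_v) of the set F_v of label sequences along left-infinite paths ending at v is a rational number. -/

import Mathlib

open MeasureTheory

def pathSet {V C : Type*} (e : V → C → V → Prop) (v : V) : Set (ℕ → C) :=
  {x | ∃ p : ℕ → V, p 0 = v ∧ ∀ k, e (p (k + 1)) (x k) (p k)}

/-!
By compactness, `x` lies in `F_v` exactly when each finite prefix of `x` lies in the language `L`
of words readable along paths ending at `v`. This language is regular, so the probability that the
prefix of length `n` lies in `L` is a coordinate of `Tⁿ g`, where `T` is a stochastic matrix with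
rational entries and `g` a rational vector. Now `μ(F_v)` is the limit of these probabilities, hence
also of their Cesàro means. The orbits of `T` being bounded, the space of rational vectors is
already the direct sum of the kernel and the range of `T - 1`, and the Cesàro means of `Tⁿ g`
converge to the kernel component of `g`, which is a rational vector.
-/

open Filter Function
open scoped ENNReal NNReal Topology

section MeanErgodic

theorem birkhoffAverage_id_add {𝕜 E F : Type*} [DivisionSemiring 𝕜] [AddCommMonoid E] [Module 𝕜 E]
    [FunLike F E E] [AddMonoidHomClass F E E] (P : F) (n : ℕ) (y z : E) :
    birkhoffAverage 𝕜 P id n (y + z) = birkhoffAverage 𝕜 P id n y + birkhoffAverage 𝕜 P id n z := by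
  simp only [birkhoffAverage, birkhoffSum, id, iterate_map_add, Finset.sum_add_distrib, smul_add]

variable {𝕜 E : Type*} [NormedField 𝕜] [CharZero 𝕜] [ContinuousSMul ℚ≥0 𝕜]
  [NormedAddCommGroup E] [NormedSpace 𝕜 E] {P : E →ₗ[𝕜] E}

theorem tendsto_birkhoffAverage_sub_of_isBounded_orbit {x : E}
    (hx : Bornology.IsBounded (Set.range fun n => P^[n] x)) :
    Tendsto (birkhoffAverage 𝕜 P id · (P x - x)) atTop (𝓝 0) := by
  have average_eq (n : ℕ) :
      birkhoffAverage 𝕜 P id n (P x - x) = (n : 𝕜)⁻¹ • (P^[n] x - x) := by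
    rw [eq_sub_of_add_eq (birkhoffAverage_id_add P n (P x - x) x).symm, sub_add_cancel,
      birkhoffAverage_apply_sub_birkhoffAverage, id, id]
  obtain ⟨M, hM⟩ := isBounded_iff_forall_norm_le.1 hx
  have norm_le (n : ℕ) : ‖P^[n] x - x‖ ≤ M + ‖x‖ :=
    (norm_sub_le _ _).trans (by gcongr; exact hM _ ⟨n, rfl⟩)
  simp only [average_eq]
  exact tendsto_inv_atTop_nhds_zero_nat.zero_smul_isBoundedUnder_le
    (isBoundedUnder_of ⟨M + ‖x‖, norm_le⟩)

theorem disjoint_ker_range_sub_one_of_isBounded_orbits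
    (hP : ∀ x, Bornology.IsBounded (Set.range fun n => P^[n] x)) :
    Disjoint (P - 1).ker (P - 1).range := by
  rw [Submodule.disjoint_def]
  rintro _ hy ⟨x, rfl⟩
  have isFixedPt : IsFixedPt P ((P - 1) x) := sub_eq_zero.1 hy
  exact tendsto_nhds_unique (isFixedPt.tendsto_birkhoffAverage 𝕜 id)
    (tendsto_birkhoffAverage_sub_of_isBounded_orbit (hP x))

theorem exists_tendsto_birkhoffAverage_of_isBounded_orbits [FiniteDimensional 𝕜 E]
    (hP : ∀ x, Bornology.IsBounded (Set.range fun n => P^[n] x)) (x : E) :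
    ∃ a, Tendsto (birkhoffAverage 𝕜 P id · x) atTop (𝓝 a) := by
  have sup_eq_top : (P - 1).ker ⊔ (P - 1).range = ⊤ :=
    Submodule.eq_top_of_disjoint _ _ (by rw [add_comm, LinearMap.finrank_range_add_finrank_ker])
      (disjoint_ker_range_sub_one_of_isBounded_orbits hP)
  obtain ⟨a, ha, _, ⟨z, rfl⟩, rfl⟩ := Submodule.mem_sup.1 (sup_eq_top ▸ Submodule.mem_top (x := x))
  have isFixedPt : IsFixedPt P a := sub_eq_zero.1 ha
  refine ⟨a, ?_⟩
  simpa only [birkhoffAverage_id_add, id, add_zero, LinearMap.sub_apply, Module.End.one_apply] using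
    (isFixedPt.tendsto_birkhoffAverage 𝕜 id).add
      (tendsto_birkhoffAverage_sub_of_isBounded_orbit (hP z))

-- With `𝕜 = ℚ` and `F = ℝ`, a limit taken in `ℝ` is seen to come from a rational vector.
theorem exists_apply_eq_of_tendsto_orbit [FiniteDimensional 𝕜 E] {F : Type*}
    [NormedAddCommGroup F] [NormedSpace ℝ F] [Module 𝕜 F]
    (hP : ∀ x, Bornology.IsBounded (Set.range fun n => P^[n] x)) (φ : E →L[𝕜] F) {x : E} {y : F}
    (hy : Tendsto (fun n => φ (P^[n] x)) atTop (𝓝 y)) :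
    ∃ a, φ a = y := by
  obtain ⟨a, ha⟩ := exists_tendsto_birkhoffAverage_of_isBounded_orbits hP x
  have map_average (n : ℕ) :
      φ (birkhoffAverage 𝕜 P id n x) = (n : ℝ)⁻¹ • ∑ k ∈ Finset.range n, φ (P^[k] x) :=
    map_birkhoffAverage 𝕜 ℝ φ P id n x
  refine ⟨a, tendsto_nhds_unique ((φ.continuous.tendsto a).comp ha) ?_⟩
  simpa only [comp_def, map_average] using hy.cesaro_smul

end MeanErgodic

section TransitionOperator

variable {R C Q : Type*} [Fintype C]

/-- The Markov operator of a deterministic automaton fed with independent random letters: `p c` is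
the probability of the letter `c`, and functions on the set `Q` of states are averaged over the
next state. -/
def transitionOp [CommSemiring R] (p : C → R) (step : Q → C → Q) : (Q → R) →ₗ[R] (Q → R) where
  toFun g q := ∑ c, p c * g (step q c)
  map_add' f g := by ext q; simp [mul_add, Finset.sum_add_distrib]
  map_smul' a g := by ext q; simp [Finset.mul_sum, mul_left_comm]

theorem transitionOp_apply [CommSemiring R] (p : C → R) (step : Q → C → Q) (g : Q → R) (q : Q) :
    transitionOp p step g q = ∑ c, p c * g (step q c) :=
  rfl

theorem transitionOp_iterate_apply [CommSemiring R] (p : C → R) (step : Q → C → Q) (g : Q → R)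
    (n : ℕ) (q : Q) :
    (transitionOp p step)^[n] g q =
      ∑ y : Fin n → C, (∏ i, p (y i)) * g ((List.ofFn y).foldl step q) := by
  induction n generalizing q with
  | zero => simp
  | succ n ih =>
    rw [iterate_succ_apply', transitionOp_apply, ← (Fin.consEquiv fun _ => C).sum_comp,
      Fintype.sum_prod_type]
    simp [ih, Fin.consEquiv, Fin.prod_univ_succ, Finset.mul_sum, mul_assoc]

theorem norm_transitionOp_apply_le [Fintype Q] [NormedCommRing R] {p : C → R}
    (hp : ∑ c, ‖p c‖ ≤ 1) (step : Q → C → Q) (g : Q → R) :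
    ‖transitionOp p step g‖ ≤ ‖g‖ := by
  refine (pi_norm_le_iff_of_nonneg (norm_nonneg g)).2 fun q => ?_
  calc ‖∑ c, p c * g (step q c)‖ ≤ ∑ c, ‖p c‖ * ‖g‖ :=
        norm_sum_le_of_le _ fun c _ => (norm_mul_le _ _).trans <|
          mul_le_mul_of_nonneg_left (norm_le_pi_norm g _) (norm_nonneg _)
    _ = (∑ c, ‖p c‖) * ‖g‖ := (Finset.sum_mul ..).symm
    _ ≤ ‖g‖ := mul_le_of_le_one_left (norm_nonneg g) hp

theorem isBounded_orbit_transitionOp [Finite Q] [NormedCommRing R] {p : C → R}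
    (hp : ∑ c, ‖p c‖ ≤ 1) (step : Q → C → Q) (g : Q → R) :
    Bornology.IsBounded (Set.range fun n => (transitionOp p step)^[n] g) := by
  cases nonempty_fintype Q
  refine isBounded_iff_forall_norm_le.2 ⟨‖g‖, Set.forall_mem_range.2 fun n => ?_⟩
  induction n with
  | zero => rfl
  | succ n ih =>
    rw [iterate_succ_apply']
    exact (norm_transitionOp_apply_le hp step _).trans ih

end TransitionOperator

section Bernoulli

variable {C : Type*}

/-- The set of sequences whose prefix of length `n` is a word of the language `L`. -/
def prefixSet (L : Language C) (n : ℕ) : Set (ℕ → C) :=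
  {x | List.ofFn (fun i : Fin n => x i) ∈ L}

variable [MeasurableSpace C]

theorem measurable_prefix (n : ℕ) : Measurable fun (x : ℕ → C) (i : Fin n) => x i :=
  measurable_pi_lambda _ fun i => measurable_pi_apply (i : ℕ)

theorem measurableSet_prefixSet [Countable C] [MeasurableSingletonClass C] (L : Language C)
    (n : ℕ) : MeasurableSet (prefixSet L n) :=
  measurable_prefix n (Set.to_countable {y : Fin n → C | List.ofFn y ∈ L}).measurableSet

/-- `μ` is the law of a sequence of independent letters, each equal to `c` with probability `p c`.
This is expressed by the measures of the cylinders, the case `m = 0` giving total mass one. -/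
def IsBernoulli (μ : Measure (ℕ → C)) (p : C → ℝ≥0) : Prop :=
  ∀ (m : ℕ) (y : Fin m → C), μ {f | ∀ i : Fin m, f (i : ℕ) = y i} = ∏ i, (p (y i) : ℝ≥0∞)

variable {μ : Measure (ℕ → C)} {p : C → ℝ≥0}

theorem IsBernoulli.isProbabilityMeasure (hμ : IsBernoulli μ p) : IsProbabilityMeasure μ :=
  ⟨by simpa using hμ 0 Fin.elim0⟩

theorem IsBernoulli.measureReal_prefix_preimage_singleton (hμ : IsBernoulli μ p) {n : ℕ}
    (y : Fin n → C) :
    μ.real ((fun (x : ℕ → C) (i : Fin n) => x i) ⁻¹' {y}) = ∏ i, (p (y i) : ℝ) := by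
  have preimage_eq : (fun (x : ℕ → C) (i : Fin n) => x i) ⁻¹' {y} =
      {x | ∀ i : Fin n, x i = y i} := by
    ext x
    simp [funext_iff]
  simp [preimage_eq, measureReal_def, hμ n y]

variable [Fintype C] [MeasurableSingletonClass C]

theorem IsBernoulli.measureReal_prefixSet (hμ : IsBernoulli μ p) (L : Language C)
    [DecidablePred (· ∈ L)] (n : ℕ) :
    μ.real (prefixSet L n) = ∑ y : Fin n → C with List.ofFn y ∈ L, ∏ i, (p (y i) : ℝ) := by
  have := hμ.isProbabilityMeasure
  simp only [← hμ.measureReal_prefix_preimage_singleton]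
  rw [sum_measureReal_preimage_singleton _ fun y _ =>
    measurable_prefix n (measurableSet_singleton y)]
  simp [prefixSet]

theorem IsBernoulli.sum_eq_one (hμ : IsBernoulli μ p) : ∑ c, p c = 1 := by
  have := hμ.isProbabilityMeasure
  have measure_eq (c : C) : μ ((fun x => x 0) ⁻¹' {c}) = p c := by
    simpa [Set.preimage] using hμ 1 fun _ => c
  have sum_eq := sum_measure_preimage_singleton (μ := μ) (f := fun x : ℕ → C => x 0) Finset.univ
    fun c _ => measurable_pi_apply 0 (measurableSet_singleton c)
  simp only [measure_eq] at sum_eq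
  rw [Finset.coe_univ, Set.preimage_univ, measure_univ] at sum_eq
  exact_mod_cast sum_eq

end Bernoulli

theorem IsBernoulli.exists_rat_eq_of_tendsto_prefixSet {C : Type*} [Finite C] [MeasurableSpace C]
    [MeasurableSingletonClass C] {μ : Measure (ℕ → C)} {w : C → ℚ≥0}
    (hμ : IsBernoulli μ fun c => (w c : ℝ≥0)) {L : Language C} (hL : L.IsRegular) {r : ℝ}
    (hr : Tendsto (fun n => μ.real (prefixSet L n)) atTop (𝓝 r)) :
    ∃ q : ℚ, (q : ℝ) = r := by
  classical
  cases nonempty_fintype C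
  obtain ⟨Q, _, M, rfl⟩ := hL
  let T := transitionOp (fun c => (w c : ℚ)) M.step
  have coe_eq (c : C) : ((w c : ℝ≥0) : ℝ) = (w c : ℚ) := rfl
  have norm_eq (c : C) : ‖(w c : ℚ)‖ = (w c : ℝ≥0) := by
    rw [← Rat.norm_cast_real, ← coe_eq, NNReal.norm_eq]
  have sum_norm_eq_one : ∑ c, ‖(w c : ℚ)‖ = 1 := by
    simp only [norm_eq]
    exact_mod_cast hμ.sum_eq_one
  have isBounded_orbits (g : Q → ℚ) : Bornology.IsBounded (Set.range fun n => T^[n] g) :=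
    isBounded_orbit_transitionOp sum_norm_eq_one.le M.step g
  let φ : (Q → ℚ) →L[ℚ] ℝ := algebraMapCLM ℚ ℝ ∘L .proj M.start
  have measureReal_eq (n : ℕ) :
      μ.real (prefixSet M.accepts n) = φ (T^[n] (M.accept.indicator 1)) := by
    simp [φ, T, coe_eq, transitionOp_iterate_apply, hμ.measureReal_prefixSet, Set.indicator_apply,
      Finset.sum_filter, DFA.mem_accepts, DFA.eval, DFA.evalFrom, apply_ite ((↑) : ℚ → ℝ)]
  simp only [measureReal_eq] at hr
  obtain ⟨a, ha⟩ := exists_apply_eq_of_tendsto_orbit isBounded_orbits φ hr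
  exact ⟨a M.start, ha⟩

section Paths

variable {V C : Type*}

theorem exists_forall_of_forall_exists_lt [Finite V] (S : Set V) (r : ℕ → V → V → Prop)
    (h : ∀ n, ∃ p : ℕ → V, p 0 ∈ S ∧ ∀ k < n, r k (p k) (p (k + 1))) :
    ∃ p : ℕ → V, p 0 ∈ S ∧ ∀ k, r k (p k) (p (k + 1)) := by
  let _ : TopologicalSpace V := ⊥
  have : DiscreteTopology V := ⟨rfl⟩
  let K (n : ℕ) : Set (ℕ → V) := {p | p 0 ∈ S ∧ ∀ k < n, r k (p k) (p (k + 1))}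
  have isClosed_step (k : ℕ) : IsClosed {p : ℕ → V | r k (p k) (p (k + 1))} :=
    (isClosed_discrete {w : V × V | r k w.1 w.2}).preimage
      (f := fun p : ℕ → V => (p k, p (k + 1))) (by fun_prop)
  have isClosed_K (n : ℕ) : IsClosed (K n) := by
    simp only [K, Set.ofPred_and, Set.ofPred_forall]
    exact ((isClosed_discrete S).preimage (continuous_apply 0)).inter
      (isClosed_iInter fun k => isClosed_iInter fun _ => isClosed_step k)
  obtain ⟨p, hp⟩ := IsCompact.nonempty_iInter_of_sequence_nonempty_isCompact_isClosed K
    (fun n _ hp => ⟨hp.1, fun k hk => hp.2 k (hk.trans n.lt_succ_self)⟩) h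
    (isClosed_K 0).isCompact isClosed_K
  rw [Set.mem_iInter] at hp
  exact ⟨p, (hp 0).1, fun k => (hp (k + 1)).2 k k.lt_succ_self⟩

theorem mem_evalFrom_ofFn_iff (M : NFA C V) (S : Set V) (x : ℕ → C) (n : ℕ) (u : V) :
    u ∈ M.evalFrom S (List.ofFn fun i : Fin n => x i) ↔
      ∃ p : ℕ → V, p 0 ∈ S ∧ p n = u ∧ ∀ k < n, p (k + 1) ∈ M.step (p k) (x k) := by
  induction n generalizing u with
  | zero =>
    simp only [List.ofFn_zero, NFA.evalFrom_nil, Nat.not_lt_zero, IsEmpty.forall_iff, implies_true,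
      and_true]
    exact ⟨fun hu => ⟨fun _ => u, hu, rfl⟩, fun ⟨_, h0, hu⟩ => hu ▸ h0⟩
  | succ n ih =>
    simp only [List.ofFn_succ', List.concat_eq_append, NFA.evalFrom_append, Fin.val_castSucc,
      Fin.val_last, NFA.evalFrom_singleton, NFA.mem_stepSet, ih]
    constructor
    · rintro ⟨_, ⟨p, h0, rfl, hp⟩, hu⟩
      exact ⟨fun k => if k ≤ n then p k else u, by simpa, by simp, by grind⟩
    · rintro ⟨p, h0, rfl, hp⟩
      exact ⟨p n, ⟨p, h0, rfl, fun k hk => hp k (hk.trans n.lt_succ_self)⟩, hp n n.lt_succ_self⟩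

theorem isRegular_accepts_nfa [Finite V] (M : NFA C V) : M.accepts.IsRegular :=
  have := Fintype.ofFinite V
  Language.isRegular_iff.2 ⟨Set V, inferInstance, M.toDFA, M.toDFA_correct⟩

/-- The automaton accepting the labels of finite paths ending at `v`. Since a sequence in
`pathSet e v` lists the labels starting from the last edge, its transitions go from the target of
an edge to the source. -/
def pathNFA (e : V → C → V → Prop) (v : V) : NFA C V where
  step w c := {u | e u c w}
  start := {v}
  accept := Set.univ

theorem mem_prefixSet_accepts_pathNFA {e : V → C → V → Prop} {v : V} {n : ℕ} {x : ℕ → C} :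
    x ∈ prefixSet (pathNFA e v).accepts n ↔
      ∃ p : ℕ → V, p 0 = v ∧ ∀ k < n, e (p (k + 1)) (x k) (p k) := by
  simp [prefixSet, NFA.mem_accepts, mem_evalFrom_ofFn_iff, pathNFA]

theorem antitone_prefixSet_accepts_pathNFA (e : V → C → V → Prop) (v : V) :
    Antitone (prefixSet (pathNFA e v).accepts) := by
  intro m n hmn x hx
  obtain ⟨p, h0, hp⟩ := mem_prefixSet_accepts_pathNFA.1 hx
  exact mem_prefixSet_accepts_pathNFA.2 ⟨p, h0, fun k hk => hp k (hk.trans_le hmn)⟩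

theorem pathSet_eq_iInter_prefixSet [Finite V] (e : V → C → V → Prop) (v : V) :
    pathSet e v = ⋂ n, prefixSet (pathNFA e v).accepts n := by
  ext x
  simp only [Set.mem_iInter, mem_prefixSet_accepts_pathNFA]
  exact ⟨fun ⟨p, h0, hp⟩ n => ⟨p, h0, fun k _ => hp k⟩,
    exists_forall_of_forall_exists_lt {v} fun k w u => e u (x k) w⟩

theorem tendsto_measureReal_prefixSet_accepts_pathNFA [Finite V] [Countable C] [MeasurableSpace C]
    [MeasurableSingletonClass C] (e : V → C → V → Prop) (v : V) (μ : Measure (ℕ → C))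
    [IsFiniteMeasure μ] :
    Tendsto (fun n => μ.real (prefixSet (pathNFA e v).accepts n)) atTop
      (𝓝 (μ.real (pathSet e v))) := by
  rw [pathSet_eq_iInter_prefixSet]
  exact (ENNReal.tendsto_toReal (measure_ne_top _ _)).comp <| tendsto_measure_iInter_atTop
    (fun n => (measurableSet_prefixSet _ n).nullMeasurableSet)
    (antitone_prefixSet_accepts_pathNFA e v) ⟨0, measure_ne_top _ _⟩

end Paths

theorem stmt10_general {V C : Type*} [Finite V] [Finite C] [MeasurableSpace C]
    [MeasurableSingletonClass C] (e : V → C → V → Prop) {μ : Measure (ℕ → C)} {w : C → ℚ≥0}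
    (hμ : IsBernoulli μ fun c => (w c : ℝ≥0)) (v : V) :
    ∃ q : ℚ, μ (pathSet e v) = ENNReal.ofReal (q : ℝ) := by
  have := hμ.isProbabilityMeasure
  obtain ⟨q, hq⟩ := hμ.exists_rat_eq_of_tendsto_prefixSet (isRegular_accepts_nfa (pathNFA e v))
    (tendsto_measureReal_prefixSet_accepts_pathNFA e v μ)
  exact ⟨q, by rw [hq, ofReal_measureReal]⟩

/-- for a finite labeled graph, the uniform Bernoulli measure of each
set `F_v` is a rational number. -/
theorem stmt10 {V C : Type*} [Fintype V] [Fintype C] [Nonempty C]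
    [MeasurableSpace C] [MeasurableSingletonClass C]
    (e : V → C → V → Prop) (μ : Measure (ℕ → C))
    (hμ : ∀ (m : ℕ) (y : Fin m → C),
      μ {f | ∀ i : Fin m, f (i : ℕ) = y i} = ((Fintype.card C : ENNReal))⁻¹ ^ m)
    (v : V) :
    ∃ q : ℚ, μ (pathSet e v) = ENNReal.ofReal (q : ℝ) :=
  stmt10_general e (w := fun _ => (Fintype.card C : ℚ≥0)⁻¹) (fun m y => by simp [hμ]) v
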